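/- Let N ≥ 1 and 0 < Λ < 1, and let (u, v) be a classical solution of the system (P_Λ) with u > 0 and v > 0 at every point of ℝ^N. Then u and v are the constants u ≡ v ≡ 1/√(1 + Λ). -/

import Mathlib

/-!
Comparing a positive function `w` on the whole space with multiples of `1 / t` and `t ^ 2`, where
`t = 1 - q |x - c|²` and `q → 0`, yields two one-sided Liouville estimates that presuppose no growth
condition: for `κ, m ≥ 0`, the inequality `Δw ≥ w (κ w² - m)` forces `κ w² ≤ m`, and
`Δw ≤ w (κ w² - m)` forces `κ w² ≥ m`.

The first estimate applied to `u + v` shows that `u` and `v` are bounded. The first equation reads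
`Δu = u (u² - (1 - Λ v²))`, and `m = 1 / (1 + Λ)` is the fixed point of `s ↦ 1 - Λ s`, so both
estimates together turn `|v² - m| ≤ r` into `|u² - m| ≤ |Λ| r`. By symmetry the roles of `u` and `v`
may be exchanged, and for `|Λ| < 1` the supremum of `|u² - m|` is therefore zero.
-/

open scoped RealInnerProductSpace
open Filter

noncomputable section

/-- The Laplacian of `f : ℝ^N → ℝ`, as the sum of the pure second partial
derivatives in the coordinate directions. -/
def lap (N : ℕ) (f : EuclideanSpace ℝ (Fin N) → ℝ) (x : EuclideanSpace ℝ (Fin N)) : ℝ :=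
  ∑ i : Fin N,
    fderiv ℝ (fun y => fderiv ℝ f y (EuclideanSpace.single i 1)) x (EuclideanSpace.single i 1)

/-- `(u, v)` is a classical solution of the system `(P_Λ)` on `ℝ^N`:
`u, v` are `C²` and `-Δu = u - u³ - Λ u v²`, `-Δv = v - v³ - Λ u² v` pointwise. -/
def IsSolution (N : ℕ) (Λ : ℝ) (u v : EuclideanSpace ℝ (Fin N) → ℝ) : Prop :=
  ContDiff ℝ 2 u ∧ ContDiff ℝ 2 v ∧
  (∀ x, -lap N u x = u x - (u x) ^ 3 - Λ * u x * (v x) ^ 2) ∧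
  (∀ x, -lap N v x = v x - (v x) ^ 3 - Λ * (u x) ^ 2 * v x)

/-- Condition `(h∞)`: `u → 1`, `v → 0` as `x_N → +∞` and `u → 0`, `v → 1` as
`x_N → -∞`, uniformly with respect to `x' ∈ ℝ^{N-1}` (the dimension is `N + 1`). -/
def Hinf (N : ℕ) (u v : EuclideanSpace ℝ (Fin (N + 1)) → ℝ) : Prop :=
  (∀ ε : ℝ, 0 < ε → ∃ M : ℝ, ∀ x : EuclideanSpace ℝ (Fin (N + 1)),
    M ≤ x (Fin.last N) → |u x - 1| < ε ∧ |v x| < ε) ∧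
  (∀ ε : ℝ, 0 < ε → ∃ M : ℝ, ∀ x : EuclideanSpace ℝ (Fin (N + 1)),
    x (Fin.last N) ≤ M → |u x| < ε ∧ |v x - 1| < ε)

section SecondOrder

open scoped Topology Laplacian

lemma deriv_deriv_nonneg_of_isLocalMin {g : ℝ → ℝ} {a : ℝ} (hmin : IsLocalMin g a)
    (hg : ContinuousAt g a) : 0 ≤ deriv (deriv g) a := by
  by_contra! hneg
  -- Otherwise `a` is also a local maximum, so `g` is locally constant and `g'' a = 0`.
  have hmax : IsLocalMax g a := isLocalMax_of_deriv_deriv_neg hneg hmin.deriv_eq_zero hg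
  have hconst : g =ᶠ[𝓝 a] fun _ => g a := by
    filter_upwards [hmin, hmax] with s h₁ h₂ using le_antisymm h₂ h₁
  simp [hconst.deriv.deriv_eq] at hneg

lemma deriv_deriv_line {E : Type*} [NormedAddCommGroup E] [NormedSpace ℝ E] {f : E → ℝ} {x : E}
    (hf : ContDiffAt ℝ 2 f x) (e : E) :
    deriv (deriv fun s : ℝ => f (x + s • e)) 0 = fderiv ℝ (fderiv ℝ f) x e e := by
  have hline (s : ℝ) : HasDerivAt (fun s : ℝ => x + s • e) e s := by
    simpa using ((hasDerivAt_id s).smul_const e).const_add x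
  have htendsto : Tendsto (fun s : ℝ => x + s • e) (𝓝 0) (𝓝 x) := by
    simpa using (hline 0).continuousAt.tendsto
  have hfirst : deriv (fun s : ℝ => f (x + s • e)) =ᶠ[𝓝 0] fun s => fderiv ℝ f (x + s • e) e := by
    filter_upwards [htendsto.eventually (hf.eventually (by simp))] with s hs
    exact ((hs.differentiableAt two_ne_zero).hasFDerivAt.comp_hasDerivAt s (hline s)).deriv
  have hsecond : HasFDerivAt (fderiv ℝ f) (fderiv ℝ (fderiv ℝ f) x) (x + (0 : ℝ) • e) := by
    rw [zero_smul, add_zero]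
    exact ((hf.fderiv_right (m := 1) (by norm_num)).differentiableAt one_ne_zero).hasFDerivAt
  have happly : HasDerivAt (fun s : ℝ => fderiv ℝ f (x + s • e) e)
      (fderiv ℝ (fderiv ℝ f) x e e) 0 :=
    (ContinuousLinearMap.apply ℝ ℝ e).hasFDerivAt.comp_hasDerivAt (0 : ℝ)
      (hsecond.comp_hasDerivAt (0 : ℝ) (hline 0))
  rw [hfirst.deriv_eq, happly.deriv]

variable {E ι : Type*} [NormedAddCommGroup E] [InnerProductSpace ℝ E] [FiniteDimensional ℝ E]
  [Fintype ι] {f g : E → ℝ} {x : E}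

lemma laplacian_eq_sum_fderiv_fderiv (b : OrthonormalBasis ι ℝ E) (f : E → ℝ) (x : E) :
    Δ f x = ∑ i, fderiv ℝ (fderiv ℝ f) x (b i) (b i) := by
  simp [InnerProductSpace.laplacian_eq_iteratedFDeriv_orthonormalBasis f b,
    iteratedFDeriv_two_apply]

lemma laplacian_nonneg_of_isLocalMin (hf : ContDiffAt ℝ 2 f x) (hmin : IsLocalMin f x) :
    0 ≤ Δ f x := by
  rw [laplacian_eq_sum_fderiv_fderiv (stdOrthonormalBasis ℝ E)]
  refine Finset.sum_nonneg fun i _ => ?_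
  set e := stdOrthonormalBasis ℝ E i
  have hline : ContinuousAt (fun s : ℝ => x + s • e) 0 := by fun_prop
  have hx : x + (0 : ℝ) • e = x := by simp
  rw [← deriv_deriv_line hf]
  refine deriv_deriv_nonneg_of_isLocalMin ?_ (hf.continuousAt.comp_of_eq hline hx)
  have hmin' : IsLocalMin f (x + (0 : ℝ) • e) := by rwa [hx]
  exact IsMinFilter.comp_tendsto hmin' hline

lemma laplacian_le_of_eventuallyLE (hf : ContDiffAt ℝ 2 f x) (hg : ContDiffAt ℝ 2 g x)
    (hle : f ≤ᶠ[𝓝 x] g) (heq : f x = g x) : Δ f x ≤ Δ g x := by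
  have hmin : IsLocalMin (g - f) x := by
    filter_upwards [hle] with y hy
    simpa [heq] using hy
  have h := laplacian_nonneg_of_isLocalMin (f := g - f) (hg.sub hf) hmin
  rwa [hg.laplacian_sub hf, sub_nonneg] at h

lemma laplacian_comp {φ : ℝ → ℝ} (hφ : ContDiffAt ℝ 2 φ (g x)) (hg : ContDiffAt ℝ 2 g x) :
    Δ (φ ∘ g) x = deriv (deriv φ) (g x) * ‖fderiv ℝ g x‖ ^ 2 + deriv φ (g x) * Δ g x := by
  have hfirst : fderiv ℝ (φ ∘ g) =ᶠ[𝓝 x] fun y => deriv φ (g y) • fderiv ℝ g y := by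
    filter_upwards [hg.eventually (by simp),
      hg.continuousAt.eventually (hφ.eventually (by simp))] with y hgy hφy
    have hderiv := (hφy.differentiableAt two_ne_zero).hasDerivAt.comp_hasFDerivAt y
      (hgy.differentiableAt two_ne_zero).hasFDerivAt
    exact hderiv.fderiv
  have hφ' : HasDerivAt (deriv φ) (deriv (deriv φ) (g x)) (g x) :=
    ((hφ.derivWithin (m := 1) (by norm_num)).differentiableAt one_ne_zero).hasDerivAt
  have hg' : HasFDerivAt g (fderiv ℝ g x) x := (hg.differentiableAt two_ne_zero).hasFDerivAt
  have hg'' : HasFDerivAt (fderiv ℝ g) (fderiv ℝ (fderiv ℝ g) x) x :=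
    ((hg.fderiv_right (m := 1) (by norm_num)).differentiableAt one_ne_zero).hasFDerivAt
  have hsecond := (hφ'.comp_hasFDerivAt x hg').smul hg''
  have hsecond_fderiv : fderiv ℝ (fderiv ℝ (φ ∘ g)) x = deriv φ (g x) • fderiv ℝ (fderiv ℝ g) x +
      (deriv (deriv φ) (g x) • fderiv ℝ g x).smulRight (fderiv ℝ g x) :=
    hfirst.fderiv_eq.trans hsecond.fderiv
  have b := stdOrthonormalBasis ℝ E
  rw [laplacian_eq_sum_fderiv_fderiv b, laplacian_eq_sum_fderiv_fderiv b, hsecond_fderiv,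
    b.norm_dual, Finset.mul_sum, Finset.mul_sum, ← Finset.sum_add_distrib]
  refine Finset.sum_congr rfl fun i _ => ?_
  simp
  ring

lemma lap_eq_laplacian {N : ℕ} {f : EuclideanSpace ℝ (Fin N) → ℝ} (hf : ContDiff ℝ 2 f) :
    lap N f = Δ f := by
  ext x
  rw [laplacian_eq_sum_fderiv_fderiv (EuclideanSpace.basisFun (Fin N) ℝ)]
  have hf' : DifferentiableAt ℝ (fderiv ℝ f) x :=
    (hf.fderiv_right (m := 1) (by norm_num)).differentiable one_ne_zero x
  simp [lap, fderiv_clm_apply hf' (differentiableAt_const _)]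

end SecondOrder

section Paraboloid

open scoped Topology Laplacian

variable {E : Type*} [NormedAddCommGroup E]

/-- The weight `1 - q |x - c|²`. For `q > 0` it is positive exactly on the ball of radius `1 / √q`
about `c`, which exhausts the space as `q → 0`; multiplying by it localizes the search for extremal
points. -/
def paraboloid (q : ℝ) (c x : E) : ℝ := 1 - q * ‖x - c‖ ^ 2

@[simp]
lemma paraboloid_self (q : ℝ) (c : E) : paraboloid q c c = 1 := by
  simp [paraboloid]

lemma paraboloid_le_one {q : ℝ} (hq : 0 ≤ q) (c x : E) : paraboloid q c x ≤ 1 :=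
  sub_le_self 1 (by positivity)

lemma continuous_paraboloid (q : ℝ) (c : E) : Continuous (paraboloid q c) := by
  unfold paraboloid
  fun_prop

lemma isCompact_setOf_paraboloid_nonneg [ProperSpace E] {q : ℝ} (hq : 0 < q) (c : E) :
    IsCompact {x | 0 ≤ paraboloid q c x} := by
  refine (isCompact_closedBall c √(1 / q)).of_isClosed_subset
    (isClosed_le continuous_const (continuous_paraboloid q c)) fun x hx => ?_
  rw [mem_closedBall_iff_norm]
  refine Real.le_sqrt_of_sq_le ?_
  rw [le_div_iff₀' hq]
  exact sub_nonneg.mp hx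

lemma exists_isLocalMax_mul_paraboloid_pow [ProperSpace E] {f : E → ℝ} (hf : Continuous f) {c : E}
    (hc : 0 < f c) {q : ℝ} (hq : 0 < q) {k : ℕ} (hk : k ≠ 0) :
    ∃ x, 0 < paraboloid q c x ∧ f c ≤ f x * paraboloid q c x ^ k ∧
      IsLocalMax (fun y => f y * paraboloid q c y ^ k) x := by
  have hcont := continuous_paraboloid q c
  have hmem : c ∈ {x | 0 ≤ paraboloid q c x} := by simp
  obtain ⟨x, hx, hmax⟩ := (isCompact_setOf_paraboloid_nonneg hq c).exists_isMaxOn ⟨c, hmem⟩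
    (hf.mul (hcont.pow k)).continuousOn
  have hcx : f c ≤ f x * paraboloid q c x ^ k := by simpa using hmax hmem
  have hne : paraboloid q c x ≠ 0 := fun h => by
    rw [h, zero_pow hk, mul_zero] at hcx
    exact hc.not_ge hcx
  have hpos : 0 < paraboloid q c x := lt_of_le_of_ne hx hne.symm
  have hnhds : {y | 0 ≤ paraboloid q c y} ∈ 𝓝 x :=
    (hcont.continuousAt.eventually (lt_mem_nhds hpos)).mono fun _ => le_of_lt
  exact ⟨x, hpos, hcx, hmax.isLocalMax hnhds⟩

variable [InnerProductSpace ℝ E]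

lemma contDiff_paraboloid (q : ℝ) (c : E) : ContDiff ℝ 2 (paraboloid q c) :=
  contDiff_const.sub (contDiff_const.mul ((contDiff_id.sub contDiff_const).norm_sq ℝ))

lemma hasFDerivAt_paraboloid (q : ℝ) (c x : E) :
    HasFDerivAt (paraboloid q c) (-(2 * q) • innerSL ℝ (x - c)) x := by
  have h := ((((hasFDerivAt_id x).sub_const c).norm_sq).const_mul q).const_sub 1
  refine h.congr_fderiv ?_
  ext e
  simp
  ring

lemma norm_fderiv_paraboloid_sq (q : ℝ) (c x : E) :
    ‖fderiv ℝ (paraboloid q c) x‖ ^ 2 = 4 * q * (1 - paraboloid q c x) := by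
  rw [(hasFDerivAt_paraboloid q c x).fderiv, norm_smul, innerSL_apply_norm, mul_pow,
    Real.norm_eq_abs, sq_abs, paraboloid]
  ring

variable [FiniteDimensional ℝ E]

lemma laplacian_paraboloid (q : ℝ) (c x : E) :
    Δ (paraboloid q c) x = -(2 * q * Module.finrank ℝ E) := by
  have hfderiv : fderiv ℝ (paraboloid q c) = fun y => -(2 * q) • innerSL ℝ (y - c) :=
    funext fun y => (hasFDerivAt_paraboloid q c y).fderiv
  have hfderiv₂ : fderiv ℝ (fderiv ℝ (paraboloid q c)) x = -(2 * q) • innerSL ℝ := by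
    rw [hfderiv]
    exact (((innerSL ℝ).hasFDerivAt.comp x ((hasFDerivAt_id x).sub_const c)).const_smul
      (-(2 * q))).fderiv
  have hterm {e : E} (he : ‖e‖ = 1) : fderiv ℝ (fderiv ℝ (paraboloid q c)) x e e = -(2 * q) := by
    rw [hfderiv₂]
    change -(2 * q) * inner ℝ e e = -(2 * q)
    rw [real_inner_self_eq_norm_sq, he, one_pow, mul_one]
  set b := stdOrthonormalBasis ℝ E
  rw [laplacian_eq_sum_fderiv_fderiv b]
  simp only [hterm (b.norm_eq_one _), Finset.sum_const, Finset.card_univ, Fintype.card_fin,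
    nsmul_eq_mul]
  ring

lemma laplacian_comp_paraboloid {φ : ℝ → ℝ} {q : ℝ} {c x : E}
    (hφ : ContDiffAt ℝ 2 φ (paraboloid q c x)) :
    Δ (φ ∘ paraboloid q c) x =
      q * (4 * deriv (deriv φ) (paraboloid q c x) * (1 - paraboloid q c x) -
        2 * Module.finrank ℝ E * deriv φ (paraboloid q c x)) := by
  rw [laplacian_comp hφ (contDiff_paraboloid q c).contDiffAt, norm_fderiv_paraboloid_sq,
    laplacian_paraboloid]
  ring

lemma laplacian_paraboloid_sq (q : ℝ) (c x : E) :
    Δ (fun y => paraboloid q c y ^ 2) x =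
      q * (8 - (8 + 4 * Module.finrank ℝ E) * paraboloid q c x) := by
  have hderiv : deriv (fun t : ℝ => t ^ 2) = fun t => 2 * t := by ext; simp
  have h := laplacian_comp_paraboloid (E := E) (φ := fun t => t ^ 2) (q := q) (c := c) (x := x)
    (by fun_prop)
  simp only [hderiv, deriv_const_mul_id'] at h
  refine h.trans ?_
  ring

lemma laplacian_paraboloid_inv (q : ℝ) {c x : E} (hx : paraboloid q c x ≠ 0) :
    Δ (fun y => (paraboloid q c y)⁻¹) x =
      q * (8 * (1 - paraboloid q c x) + 2 * Module.finrank ℝ E * paraboloid q c x) /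
        paraboloid q c x ^ 3 := by
  have hderiv : deriv (fun t : ℝ => t⁻¹) = fun t => -(t ^ 2)⁻¹ := by ext; simp
  have hderiv₂ : deriv (fun t : ℝ => -(t ^ 2)⁻¹) (paraboloid q c x) =
      2 / paraboloid q c x ^ 3 := by
    have h := (((hasDerivAt_id (paraboloid q c x)).pow 2).inv (pow_ne_zero 2 hx)).neg
    refine h.deriv.trans ?_
    simp
    field_simp
  have h := laplacian_comp_paraboloid (E := E) (φ := fun t => t⁻¹) (contDiffAt_inv ℝ hx)
  simp only [hderiv, hderiv₂] at h
  refine h.trans ?_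
  field_simp
  ring

end Paraboloid

section EntireInequalities

open scoped Topology Laplacian

lemma le_of_forall_pos_le_add_mul {a b C : ℝ} (h : ∀ q > 0, a ≤ b + C * q) : a ≤ b := by
  have hlim : Tendsto (fun q : ℝ => b + C * q) (𝓝[>] 0) (𝓝 b) := by
    refine tendsto_nhdsWithin_of_tendsto_nhds ?_
    simpa using (by fun_prop : Continuous fun q : ℝ => b + C * q).tendsto 0
  exact ge_of_tendsto hlim (eventually_mem_nhdsWithin.mono h)

variable {E : Type*} [NormedAddCommGroup E] [InnerProductSpace ℝ E] [FiniteDimensional ℝ E]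
  {w : E → ℝ} {κ m : ℝ}

/-- At a local maximum of `w t`, with `t` the paraboloid, a multiple of `1 / t` touches `w` from
above. -/
lemma exists_sq_mul_laplacian_le (hw : ContDiff ℝ 2 w) {c : E} (hc : 0 < w c) {q : ℝ}
    (hq : 0 < q) :
    ∃ x, ∃ t ∈ Set.Ioc (0 : ℝ) 1, w c ≤ w x * t ∧
      t ^ 2 * Δ w x ≤ w x * (q * (8 * (1 - t) + 2 * Module.finrank ℝ E * t)) := by
  obtain ⟨x, ht, hcx, hmax⟩ :=
    exists_isLocalMax_mul_paraboloid_pow hw.continuous hc hq one_ne_zero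
  simp only [pow_one] at hcx hmax
  set t := paraboloid q c x with ht_def
  set K := w x * t
  have hinv : ContDiffAt ℝ 2 (fun y => (paraboloid q c y)⁻¹) x :=
    (contDiff_paraboloid q c).contDiffAt.inv ht.ne'
  have htouch : w ≤ᶠ[𝓝 x] K • fun y => (paraboloid q c y)⁻¹ := by
    filter_upwards [hmax,
      (continuous_paraboloid q c).continuousAt.eventually (lt_mem_nhds ht)] with y hy hty
    exact (le_div_iff₀ hty).mpr hy
  have hlap : Δ w x ≤ K * (q * (8 * (1 - t) + 2 * Module.finrank ℝ E * t) / t ^ 3) := by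
    have h := laplacian_le_of_eventuallyLE (g := K • fun y => (paraboloid q c y)⁻¹)
      hw.contDiffAt (hinv.const_smul K) htouch
      (by simp [K, ← ht_def, ht.ne'])
    rwa [InnerProductSpace.laplacian_smul K hinv, laplacian_paraboloid_inv q ht.ne'] at h
  refine ⟨x, t, ⟨ht, paraboloid_le_one hq.le c x⟩, hcx, ?_⟩
  calc t ^ 2 * Δ w x
      ≤ t ^ 2 * (K * (q * (8 * (1 - t) + 2 * Module.finrank ℝ E * t) / t ^ 3)) := by gcongr
    _ = w x * (q * (8 * (1 - t) + 2 * Module.finrank ℝ E * t)) := by simp only [K]; field_simp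

/-- At a local maximum of `t ^ 2 / w`, with `t` the paraboloid, a multiple of `t ^ 2` touches `w`
from below. -/
lemma exists_mul_le_sq_mul_laplacian (hw : ContDiff ℝ 2 w) (hpos : ∀ x, 0 < w x) (c : E) {q : ℝ}
    (hq : 0 < q) :
    ∃ x, ∃ t ∈ Set.Ioc (0 : ℝ) 1, w x ≤ w c * t ^ 2 ∧
      w x * (q * (8 - (8 + 4 * Module.finrank ℝ E) * t)) ≤ t ^ 2 * Δ w x := by
  obtain ⟨x, ht, hcx, hmax⟩ := exists_isLocalMax_mul_paraboloid_pow (f := fun y => (w y)⁻¹)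
    (hw.continuous.inv₀ fun y => (hpos y).ne') (inv_pos.mpr (hpos c)) hq two_ne_zero
  set t := paraboloid q c x with ht_def
  set K := w x / t ^ 2
  have hsq : ContDiffAt ℝ 2 (fun y => paraboloid q c y ^ 2) x :=
    ((contDiff_paraboloid q c).pow 2).contDiffAt
  have htouch : K • (fun y => paraboloid q c y ^ 2) ≤ᶠ[𝓝 x] w := by
    filter_upwards [hmax] with y hy
    have hwx := hpos x
    have hwy := hpos y
    change w x / t ^ 2 * paraboloid q c y ^ 2 ≤ w y
    rw [inv_mul_le_iff₀ hwy, ← mul_assoc, mul_comm, ← ht_def] at hy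
    rw [div_mul_eq_mul_div, div_le_iff₀ (by positivity)]
    field_simp at hy
    linarith
  have hlap : K * (q * (8 - (8 + 4 * Module.finrank ℝ E) * t)) ≤ Δ w x := by
    have h := laplacian_le_of_eventuallyLE (f := K • fun y => paraboloid q c y ^ 2)
      (hsq.const_smul K) hw.contDiffAt htouch
      (by simp [K, ← ht_def, ht.ne'])
    rwa [InnerProductSpace.laplacian_smul K hsq, laplacian_paraboloid_sq] at h
  refine ⟨x, t, ⟨ht, paraboloid_le_one hq.le c x⟩, ?_, ?_⟩
  · rwa [inv_le_iff_one_le_mul₀ (hpos c), inv_mul_eq_div, div_mul_eq_mul_div,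
      one_le_div₀ (hpos x), mul_comm] at hcx
  · calc w x * (q * (8 - (8 + 4 * Module.finrank ℝ E) * t))
        = t ^ 2 * (K * (q * (8 - (8 + 4 * Module.finrank ℝ E) * t))) := by
          simp only [K]; field_simp
      _ ≤ t ^ 2 * Δ w x := by gcongr

lemma mul_sq_le_of_le_laplacian (hw : ContDiff ℝ 2 w) (hpos : ∀ x, 0 < w x) (hκ : 0 ≤ κ)
    (hm : 0 ≤ m) (hlap : ∀ x, w x * (κ * w x ^ 2 - m) ≤ Δ w x) (c : E) : κ * w c ^ 2 ≤ m := by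
  refine le_of_forall_pos_le_add_mul (C := 8 + 2 * Module.finrank ℝ E) fun q hq => ?_
  obtain ⟨x, t, ⟨ht, ht_le⟩, hcx, hΔ⟩ := exists_sq_mul_laplacian_le hw (hpos c) hq
  have hx : t ^ 2 * (κ * w x ^ 2 - m) ≤ q * (8 * (1 - t) + 2 * Module.finrank ℝ E * t) := by
    refine le_of_mul_le_mul_left (le_trans ?_ hΔ) (hpos x)
    rw [mul_left_comm]
    gcongr
    exact hlap x
  calc κ * w c ^ 2
      ≤ κ * (w x * t) ^ 2 := by gcongr; exact (hpos c).le
    _ = t ^ 2 * (κ * w x ^ 2 - m) + m * t ^ 2 := by ring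
    _ ≤ q * (8 * (1 - 0) + 2 * Module.finrank ℝ E * 1) + m * 1 ^ 2 := by
        refine (add_le_add_left hx _).trans ?_
        gcongr
    _ = m + (8 + 2 * Module.finrank ℝ E) * q := by ring

lemma le_mul_sq_of_laplacian_le (hw : ContDiff ℝ 2 w) (hpos : ∀ x, 0 < w x) (hκ : 0 ≤ κ)
    (hlap : ∀ x, Δ w x ≤ w x * (κ * w x ^ 2 - m)) (c : E) : m ≤ κ * w c ^ 2 := by
  set n := (Module.finrank ℝ E : ℝ)
  refine le_of_forall_pos_le_add_mul (C := (n + 2) ^ 2 / 2) fun q hq => ?_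
  obtain ⟨x, t, ⟨ht, ht_le⟩, hxc, hΔ⟩ := exists_mul_le_sq_mul_laplacian hw hpos c hq
  have hwx : w x ≤ w c := hxc.trans (mul_le_of_le_one_right (hpos c).le (pow_le_one₀ ht.le ht_le))
  have hx : q * (8 - (8 + 4 * n) * t) ≤ t ^ 2 * (κ * w x ^ 2 - m) := by
    refine le_of_mul_le_mul_left (hΔ.trans ?_) (hpos x)
    rw [mul_left_comm]
    gcongr
    exact hlap x
  -- Completing the square absorbs the first-order term in `t`, so that `t ^ 2` can be cancelled.
  have hsquare : 8 - (8 + 4 * n) * t = ((n + 2) * t - 4) ^ 2 / 2 - (n + 2) ^ 2 / 2 * t ^ 2 := by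
    ring
  have hcancel : t ^ 2 * m ≤ t ^ 2 * (κ * w x ^ 2 + (n + 2) ^ 2 / 2 * q) := by
    have hnonneg : 0 ≤ q * (((n + 2) * t - 4) ^ 2 / 2) := by positivity
    rw [hsquare] at hx
    linarith
  calc m ≤ κ * w x ^ 2 + (n + 2) ^ 2 / 2 * q := le_of_mul_le_mul_left hcancel (by positivity)
    _ ≤ κ * w c ^ 2 + (n + 2) ^ 2 / 2 * q := by gcongr; exact (hpos x).le

lemma abs_sq_sub_le_of_laplacian_eq {a : E → ℝ} {r : ℝ} (hw : ContDiff ℝ 2 w)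
    (hpos : ∀ x, 0 < w x) (hlap : ∀ x, Δ w x = w x * (w x ^ 2 - a x)) (hm : 0 ≤ m)
    (ha : ∀ x, |a x - m| ≤ r) (x : E) : |w x ^ 2 - m| ≤ r := by
  have hr : 0 ≤ r := (abs_nonneg _).trans (ha x)
  rw [abs_sub_le_iff, sub_le_iff_le_add', sub_le_comm]
  constructor
  · rw [← one_mul (w x ^ 2)]
    refine mul_sq_le_of_le_laplacian hw hpos zero_le_one (add_nonneg hm hr) (fun y => ?_) x
    rw [hlap, one_mul]
    have := hpos y
    gcongr
    linarith [(abs_le.mp (ha y)).2]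
  · rw [← one_mul (w x ^ 2)]
    refine le_mul_sq_of_laplacian_le hw hpos zero_le_one (fun y => ?_) x
    rw [hlap, one_mul]
    have := hpos y
    gcongr
    linarith [(abs_le.mp (ha y)).1]

end EntireInequalities

section System

open scoped Laplacian

lemma nonpos_of_forall_le_imp_le_mul {α : Type*} {f : α → ℝ} {θ : ℝ} (hθ : θ < 1)
    (hbdd : BddAbove (Set.range f)) (h : ∀ r, (∀ x, f x ≤ r) → ∀ x, f x ≤ θ * r) (x : α) :
    f x ≤ 0 := by
  have : Nonempty α := ⟨x⟩
  have hsup : ⨆ y, f y ≤ θ * ⨆ y, f y := ciSup_le (h _ (le_ciSup hbdd))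
  have hsup_nonpos : ⨆ y, f y ≤ 0 := by nlinarith
  exact (le_ciSup hbdd x).trans hsup_nonpos

namespace IsSolution

variable {N : ℕ} {Λ : ℝ} {u v : EuclideanSpace ℝ (Fin N) → ℝ}

lemma swap (h : IsSolution N Λ u v) : IsSolution N Λ v u := by
  obtain ⟨hu, hv, hequ, heqv⟩ := h
  exact ⟨hv, hu, fun x => (heqv x).trans (by ring), fun x => (hequ x).trans (by ring)⟩

lemma laplacian_left (h : IsSolution N Λ u v) (x : EuclideanSpace ℝ (Fin N)) :
    Δ u x = u x * (u x ^ 2 - (1 - Λ * v x ^ 2)) := by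
  obtain ⟨hu, -, hequ, -⟩ := h
  rw [← lap_eq_laplacian hu]
  linear_combination -hequ x

/-- The sum satisfies `Δ(u + v) = (u + v) (u² - u v + v² + Λ u v - 1)`. The constant
`(1 + Λ) / 4` is the minimum of `u² - u v + v² + Λ u v` over `u + v = 1`, attained at `u = v`. -/
lemma sq_add_le (h : IsSolution N Λ u v) (hu : ∀ x, 0 < u x) (hv : ∀ x, 0 < v x)
    (hΛ : Λ ∈ Set.Icc (-1) 3) (x : EuclideanSpace ℝ (Fin N)) :
    (1 + Λ) / 4 * (u x + v x) ^ 2 ≤ 1 := by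
  obtain ⟨hΛ₁, hΛ₃⟩ := hΛ
  refine mul_sq_le_of_le_laplacian (w := u + v) (h.1.add h.2.1) (fun y => add_pos (hu y) (hv y))
    (by linarith) zero_le_one (fun y => ?_) x
  rw [h.1.contDiffAt.laplacian_add h.2.1.contDiffAt, h.laplacian_left, h.swap.laplacian_left,
    Pi.add_apply]
  have hnonneg : 0 ≤ (u y + v y) * ((3 - Λ) / 4 * (u y - v y) ^ 2) :=
    mul_nonneg (add_pos (hu y) (hv y)).le (mul_nonneg (by linarith) (sq_nonneg _))
  linear_combination hnonneg

lemma abs_sq_sub_le (h : IsSolution N Λ u v) (hu : ∀ x, 0 < u x) (hΛ : -1 < Λ) {r : ℝ}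
    (hr : ∀ x, |v x ^ 2 - 1 / (1 + Λ)| ≤ r) (x : EuclideanSpace ℝ (Fin N)) :
    |u x ^ 2 - 1 / (1 + Λ)| ≤ |Λ| * r := by
  have hΛ' : 0 < 1 + Λ := by linarith
  refine abs_sq_sub_le_of_laplacian_eq h.1 hu h.laplacian_left (by positivity) (fun y => ?_) x
  have hfixed : 1 - Λ * v y ^ 2 - 1 / (1 + Λ) = -Λ * (v y ^ 2 - 1 / (1 + Λ)) := by
    field_simp
    ring
  rw [hfixed, abs_mul, abs_neg]
  gcongr
  exact hr y

lemma eq_one_div_sqrt (h : IsSolution N Λ u v) (hu : ∀ x, 0 < u x) (hv : ∀ x, 0 < v x)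
    (hΛ : |Λ| < 1) (x : EuclideanSpace ℝ (Fin N)) : u x = 1 / √(1 + Λ) := by
  obtain ⟨hΛ_gt, hΛ_lt⟩ := abs_lt.mp hΛ
  have hΛ_pos : 0 < 1 + Λ := by linarith
  have hbdd : BddAbove (Set.range fun y => |u y ^ 2 - 1 / (1 + Λ)|) := by
    refine ⟨4 / (1 + Λ) + 1 / (1 + Λ), ?_⟩
    rintro _ ⟨y, rfl⟩
    have hsum : (u y + v y) ^ 2 ≤ 4 / (1 + Λ) := by
      rw [le_div_iff₀ hΛ_pos]
      linarith [h.sq_add_le hu hv ⟨hΛ_gt.le, by linarith⟩ y]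
    have hle : u y ^ 2 ≤ (u y + v y) ^ 2 :=
      pow_le_pow_left₀ (hu y).le (le_add_of_nonneg_right (hv y).le) 2
    have hinv : 0 ≤ 1 / (1 + Λ) := by positivity
    exact abs_le.mpr ⟨by linarith [sq_nonneg (u y), sq_nonneg (u y + v y)], by linarith⟩
  have hcontract (r : ℝ) (hr : ∀ y, |u y ^ 2 - 1 / (1 + Λ)| ≤ r) (y : EuclideanSpace ℝ (Fin N)) :
      |u y ^ 2 - 1 / (1 + Λ)| ≤ |Λ| * |Λ| * r := by
    rw [mul_assoc]
    exact h.abs_sq_sub_le hu hΛ_gt (h.swap.abs_sq_sub_le hv hΛ_gt hr) y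
  have hsq : u x ^ 2 = 1 / (1 + Λ) := sub_eq_zero.mp <| abs_nonpos_iff.mp <|
    nonpos_of_forall_le_imp_le_mul (mul_lt_one_of_nonneg_of_lt_one_left (abs_nonneg Λ) hΛ hΛ.le)
      hbdd hcontract x
  rw [← Real.sqrt_sq (hu x).le, hsq, Real.sqrt_div zero_le_one, Real.sqrt_one]

end IsSolution

end System

theorem stmt_6_general (N : ℕ) (Λ : ℝ) (hΛ : |Λ| < 1) (u v : EuclideanSpace ℝ (Fin N) → ℝ)
    (hsol : IsSolution N Λ u v) (hu : ∀ x, 0 < u x) (hv : ∀ x, 0 < v x) :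
    ∀ x, u x = 1 / Real.sqrt (1 + Λ) ∧ v x = 1 / Real.sqrt (1 + Λ) :=
  fun x => ⟨hsol.eq_one_div_sqrt hu hv hΛ x, hsol.swap.eq_one_div_sqrt hv hu hΛ x⟩

/-- Theorem 1.6: Liouville theorem for `0 < Λ < 1`: positive
solutions are the constant `1/√(1+Λ)`. -/
theorem stmt_6 (N : ℕ) (Λ : ℝ) (hΛ₀ : 0 < Λ) (hΛ₁ : Λ < 1)
    (u v : EuclideanSpace ℝ (Fin (N + 1)) → ℝ)
    (hsol : IsSolution (N + 1) Λ u v)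
    (hu : ∀ x, 0 < u x) (hv : ∀ x, 0 < v x) :
    ∀ x, u x = 1 / Real.sqrt (1 + Λ) ∧ v x = 1 / Real.sqrt (1 + Λ) := by
  exact stmt_6_general (N + 1) Λ (abs_lt.mpr ⟨by linarith, hΛ₁⟩) u v hsol hu hv
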